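/- Let 0<α<1, β > 0, and let λ, μ > 0 with λ ≠ μ. Then for every t > 0, ∫₀ᵗ τ^{α−1} E_{α,α}(−μ τ^α) (t−τ)^{β−1} E_{α,β}(−λ (t−τ)^α) dτ = ((λ E_{α,α+β}(−λ t^α) − μ E_{α,α+β}(−μ t^α))/(λ − μ)) · t^{α+β−1}. -/

import Mathlib

open MeasureTheory Set Filter

/-- The two-parameter Mittag-Leffler function `E_{α,β}(z) = ∑_{k≥0} z^k/Γ(αk+β)`. -/
noncomputable def ml (α β z : ℝ) : ℝ := ∑' k : ℕ, z ^ k / Real.Gamma (α * k + β)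

/-!
Put `g_p(x) = x^(p-1)/Γ(p)`. The beta integral says `g_p * g_q = g_{p+q}` for convolution on
`(0, t)`, and `x^(β-1) E_{α,β}(a x^α) = ∑ₖ aᵏ g_{αk+β}(x)`. Convolving two such series termwise and
collecting equal powers gives `∑ₙ (∑_{j+k=n} aʲ bᵏ) g_{αn+β+γ}(t)`, where the inner sum is
`(aⁿ⁺¹ - bⁿ⁺¹)/(a - b)`.
-/

lemma rpow_mul_exp_neg_le_Gamma {x R : ℝ} (hx : 1 ≤ x) (hR : 0 ≤ R) :
    R ^ (x - 1) * Real.exp (-R) ≤ Real.Gamma x := by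
  have hΓ := Real.GammaIntegral_convergent (zero_lt_one.trans_le hx)
  rw [Real.Gamma_eq_integral (zero_lt_one.trans_le hx), ← integral_exp_neg_Ioi,
    ← integral_const_mul]
  calc ∫ s in Ioi R, R ^ (x - 1) * Real.exp (-s)
      ≤ ∫ s in Ioi R, Real.exp (-s) * s ^ (x - 1) := by
        refine setIntegral_mono_on ((integrableOn_exp_neg_Ioi R).const_mul _)
          (hΓ.mono_set (Ioi_subset_Ioi hR)) measurableSet_Ioi fun s (hs : R < s) ↦ ?_
        rw [mul_comm]
        gcongr
    _ ≤ ∫ s in Ioi 0, Real.exp (-s) * s ^ (x - 1) := by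
        refine setIntegral_mono_set hΓ ?_ (Ioi_subset_Ioi hR).eventuallyLE
        filter_upwards [ae_restrict_mem measurableSet_Ioi] with s (hs : 0 < s)
        exact mul_nonneg (Real.exp_nonneg _) (Real.rpow_nonneg hs.le _)

lemma rpow_mul_natCast_add_sub_one {x : ℝ} (hx : 0 < x) (α β : ℝ) (k : ℕ) :
    x ^ (α * k + β - 1) = (x ^ α) ^ k * x ^ (β - 1) := by
  rw [← Real.rpow_mul_natCast hx.le, ← Real.rpow_add hx, add_sub_assoc]

lemma summable_pow_div_Gamma {α : ℝ} (hα : 0 < α) (β z : ℝ) :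
    Summable fun k : ℕ ↦ z ^ k / Real.Gamma (α * k + β) := by
  obtain ⟨R, hzR, hR⟩ : ∃ R : ℝ, |z| < R ^ α ∧ 0 < R :=
    (((tendsto_rpow_atTop hα).eventually_gt_atTop |z|).and (eventually_gt_atTop 0)).exists
  have hRα : 0 < R ^ α := Real.rpow_pos_of_pos hR α
  have hgeom : Summable fun k : ℕ ↦ (|z| / R ^ α) ^ k :=
    summable_geometric_of_lt_one (by positivity) ((div_lt_one hRα).2 hzR)
  have hlarge : ∀ᶠ k : ℕ in atTop, 1 ≤ α * k + β :=
    (tendsto_atTop_add_const_right _ β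
      (tendsto_natCast_atTop_atTop.const_mul_atTop hα)).eventually_ge_atTop 1
  refine summable_of_isBigO_nat hgeom (.of_bound (R ^ (β - 1) * Real.exp (-R))⁻¹ ?_)
  filter_upwards [hlarge] with k hk
  calc ‖z ^ k / Real.Gamma (α * k + β)‖
      = |z| ^ k / Real.Gamma (α * k + β) := by
        rw [norm_div, norm_pow, Real.norm_eq_abs,
          Real.norm_of_nonneg (Real.Gamma_nonneg_of_nonneg (zero_le_one.trans hk))]
    _ ≤ |z| ^ k / (R ^ (α * k + β - 1) * Real.exp (-R)) := by
        gcongr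
        exact rpow_mul_exp_neg_le_Gamma hk hR.le
    _ = (R ^ (β - 1) * Real.exp (-R))⁻¹ * (|z| / R ^ α) ^ k := by
        rw [rpow_mul_natCast_add_sub_one hR, div_pow]
        field_simp
    _ = (R ^ (β - 1) * Real.exp (-R))⁻¹ * ‖(|z| / R ^ α) ^ k‖ := by
        rw [Real.norm_of_nonneg (by positivity)]

lemma integral_rpow_mul_sub_rpow {p q t : ℝ} (hp : 0 < p) (hq : 0 < q) (ht : 0 < t) :
    ∫ x in (0 : ℝ)..t, x ^ (p - 1) * (t - x) ^ (q - 1)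
      = t ^ (p + q - 1) * (Real.Gamma p * Real.Gamma q / Real.Gamma (p + q)) := by
  apply Complex.ofReal_injective
  rw [← intervalIntegral.integral_ofReal]
  calc ∫ x in (0 : ℝ)..t, ((x ^ (p - 1) * (t - x) ^ (q - 1) : ℝ) : ℂ)
      = ∫ x in (0 : ℝ)..t, (x : ℂ) ^ ((p : ℂ) - 1) * ((t : ℂ) - x) ^ ((q : ℂ) - 1) := by
        refine intervalIntegral.integral_congr fun x hx ↦ ?_
        rw [uIcc_of_le ht.le] at hx
        push_cast [Complex.ofReal_cpow hx.1, Complex.ofReal_cpow (sub_nonneg.2 hx.2)]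
        rfl
    _ = ((t ^ (p + q - 1) * (Real.Gamma p * Real.Gamma q / Real.Gamma (p + q)) : ℝ) : ℂ) := by
        rw [Complex.betaIntegral_scaled _ _ ht,
          Complex.betaIntegral_eq_Gamma_mul_div _ _ (by simpa) (by simpa)]
        push_cast [Complex.ofReal_cpow ht.le, ← Complex.Gamma_ofReal]
        rfl

/-- The Riemann–Liouville kernel `g_p(x) = x^(p-1)/Γ(p)`: convolution on `(0, ∞)` with `g_p` is
fractional integration of order `p`. There is no cutoff to `x > 0` in the
definition, which is meaningful only for `p, x > 0`. -/
noncomputable def rlKernel (p x : ℝ) : ℝ := x ^ (p - 1) / Real.Gamma p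

lemma rlKernel_pos {p x : ℝ} (hp : 0 < p) (hx : 0 < x) : 0 < rlKernel p x :=
  div_pos (Real.rpow_pos_of_pos hx _) (Real.Gamma_pos_of_pos hp)

lemma integral_rlKernel_mul_rlKernel {p q t : ℝ} (hp : 0 < p) (hq : 0 < q) (ht : 0 < t) :
    ∫ x in (0 : ℝ)..t, rlKernel p x * rlKernel q (t - x) = rlKernel (p + q) t := by
  have hΓp := (Real.Gamma_pos_of_pos hp).ne'
  have hΓq := (Real.Gamma_pos_of_pos hq).ne'
  simp only [rlKernel, div_mul_div_comm]
  rw [intervalIntegral.integral_div, integral_rpow_mul_sub_rpow hp hq ht]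
  field_simp

lemma intervalIntegrable_rlKernel_mul_rlKernel {p q t : ℝ} (hp : 0 < p) (hq : 0 < q)
    (ht : 0 < t) :
    IntervalIntegrable (fun x ↦ rlKernel p x * rlKernel q (t - x)) volume 0 t := by
  -- A non-integrable function would have integral `0`.
  refine not_imp_comm.1 intervalIntegral.integral_undef ?_
  rw [integral_rlKernel_mul_rlKernel hp hq ht]
  exact (rlKernel_pos (add_pos hp hq) ht).ne'

lemma hasSum_pow_mul_rlKernel {α x : ℝ} (hα : 0 < α) (hx : 0 < x) (β a : ℝ) :
    HasSum (fun k : ℕ ↦ a ^ k * rlKernel (α * k + β) x) (x ^ (β - 1) * ml α β (a * x ^ α)) := by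
  refine ((summable_pow_div_Gamma hα β (a * x ^ α)).hasSum.mul_left _).congr_fun fun k ↦ ?_
  rw [rlKernel, rpow_mul_natCast_add_sub_one hx, mul_pow]
  ring

lemma hasSum_pow_mul_rlKernel_mul_pow_mul_rlKernel {α x y : ℝ} (hα : 0 < α) (hx : 0 < x)
    (hy : 0 < y) (β γ a b : ℝ) :
    HasSum (fun p : ℕ × ℕ ↦
        a ^ p.1 * rlKernel (α * p.1 + β) x * (b ^ p.2 * rlKernel (α * p.2 + γ) y))
      (x ^ (β - 1) * ml α β (a * x ^ α) * (y ^ (γ - 1) * ml α γ (b * y ^ α))) := by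
  have hleft := hasSum_pow_mul_rlKernel hα hx β a
  have hright := hasSum_pow_mul_rlKernel hα hy γ b
  have hprod := summable_mul_of_summable_norm hleft.summable.norm hright.summable.norm
  exact hleft.mul hright hprod

section DoubleSeries

open Finset.HasAntidiagonal (antidiagonal mem_antidiagonal)

lemma sum_antidiagonal_pow_mul_pow_le {a b : ℝ} (ha : 0 ≤ a) (hb : 0 ≤ b) (n : ℕ) :
    ∑ p ∈ antidiagonal n, a ^ p.1 * b ^ p.2 ≤ (a + b) ^ n := by
  rw [(Commute.all a b).add_pow']
  refine Finset.sum_le_sum fun p hp ↦ ?_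
  have hchoose : n.choose p.1 ≠ 0 :=
    (Nat.choose_pos (Finset.HasAntidiagonal.antidiagonal.fst_le hp)).ne'
  exact le_self_nsmul (by positivity) hchoose

lemma sum_coe_antidiagonal_pow_mul_pow_mul {R : Type*} [CommSemiring R] (a b : R) (h : ℕ → R)
    (n : ℕ) :
    ∑ p : antidiagonal n, a ^ p.1.1 * b ^ p.1.2 * h (p.1.1 + p.1.2)
      = (∑ p ∈ antidiagonal n, a ^ p.1 * b ^ p.2) * h n := by
  rw [Finset.sum_coe_sort _ fun p : ℕ × ℕ ↦ a ^ p.1 * b ^ p.2 * h (p.1 + p.2), Finset.sum_mul]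
  exact Finset.sum_congr rfl fun p hp ↦ by rw [mem_antidiagonal.1 hp]

lemma summable_pow_mul_pow_mul_add {a b : ℝ} {h : ℕ → ℝ} (ha : 0 ≤ a) (hb : 0 ≤ b)
    (hh : ∀ n, 0 ≤ h n) (hsum : Summable fun n ↦ (a + b) ^ n * h n) :
    Summable fun p : ℕ × ℕ ↦ a ^ p.1 * b ^ p.2 * h (p.1 + p.2) := by
  have hnonneg (p : ℕ × ℕ) : 0 ≤ a ^ p.1 * b ^ p.2 * h (p.1 + p.2) :=
    mul_nonneg (by positivity) (hh _)
  rw [← Finset.HasAntidiagonal.sigmaAntidiagonalEquivProd.summable_iff,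
    summable_sigma_of_nonneg fun _ ↦ by exact hnonneg _]
  refine ⟨fun _ ↦ (hasSum_fintype _).summable, ?_⟩
  refine hsum.of_nonneg_of_le (fun n ↦ tsum_nonneg fun _ ↦ hnonneg _) fun n ↦ ?_
  rw [tsum_fintype]
  exact (sum_coe_antidiagonal_pow_mul_pow_mul a b h n).trans_le
    (mul_le_mul_of_nonneg_right (sum_antidiagonal_pow_mul_pow_le ha hb n) (hh n))

lemma hasSum_sum_antidiagonal_pow_mul_pow_mul {R : Type*} [CommSemiring R] [TopologicalSpace R]
    [ContinuousAdd R] [RegularSpace R] {a b s : R} {h : ℕ → R}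
    (hs : HasSum (fun p : ℕ × ℕ ↦ a ^ p.1 * b ^ p.2 * h (p.1 + p.2)) s) :
    HasSum (fun n ↦ (∑ p ∈ antidiagonal n, a ^ p.1 * b ^ p.2) * h n) s := by
  rw [← Finset.HasAntidiagonal.sigmaAntidiagonalEquivProd.hasSum_iff] at hs
  exact (hs.sigma fun _ ↦ hasSum_fintype _).congr_fun fun n ↦
    (sum_coe_antidiagonal_pow_mul_pow_mul a b h n).symm

lemma sum_antidiagonal_pow_mul_pow {K : Type*} [Field K] {a b : K} (hab : a ≠ b) (n : ℕ) :
    ∑ p ∈ antidiagonal n, a ^ p.1 * b ^ p.2 = (a ^ (n + 1) - b ^ (n + 1)) / (a - b) := by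
  rw [Finset.Nat.sum_antidiagonal_eq_sum_range_succ fun i j ↦ a ^ i * b ^ j]
  exact (Commute.all a b).geom_sum₂ hab (n + 1)

end DoubleSeries

section Convolution

variable {α β γ t : ℝ}

lemma integral_pow_mul_rlKernel_mul_pow_mul_rlKernel (hα : 0 < α) (hβ : 0 < β) (hγ : 0 < γ)
    (ht : 0 < t) (a b : ℝ) (j k : ℕ) :
    ∫ x in (0 : ℝ)..t, a ^ j * rlKernel (α * j + β) x * (b ^ k * rlKernel (α * k + γ) (t - x))
      = a ^ j * b ^ k * rlKernel (α * ↑(j + k) + (β + γ)) t := by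
  have hp : 0 < α * j + β := by positivity
  have hq : 0 < α * k + γ := by positivity
  have horder : α * j + β + (α * k + γ) = α * ↑(j + k) + (β + γ) := by
    push_cast
    ring
  simp only [mul_mul_mul_comm (a ^ j)]
  rw [intervalIntegral.integral_const_mul, integral_rlKernel_mul_rlKernel hp hq ht, horder]

lemma hasSum_integral_mul_ml (hα : 0 < α) (hβ : 0 < β) (hγ : 0 < γ) (ht : 0 < t) (a b : ℝ) :
    HasSum (fun p : ℕ × ℕ ↦ a ^ p.1 * b ^ p.2 * rlKernel (α * ↑(p.1 + p.2) + (β + γ)) t)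
      (∫ x in (0 : ℝ)..t, x ^ (β - 1) * ml α β (a * x ^ α) *
        ((t - x) ^ (γ - 1) * ml α γ (b * (t - x) ^ α))) := by
  let F (a b : ℝ) (p : ℕ × ℕ) (x : ℝ) : ℝ :=
    a ^ p.1 * rlKernel (α * p.1 + β) x * (b ^ p.2 * rlKernel (α * p.2 + γ) (t - x))
  have hF_integral (a b : ℝ) (p : ℕ × ℕ) : ∫ x in Ioo 0 t, F a b p x
      = a ^ p.1 * b ^ p.2 * rlKernel (α * ↑(p.1 + p.2) + (β + γ)) t := by
    rw [← integral_pow_mul_rlKernel_mul_pow_mul_rlKernel hα hβ hγ ht,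
      intervalIntegral.integral_of_le ht.le, integral_Ioc_eq_integral_Ioo]
  have hF_integrable (p : ℕ × ℕ) : IntegrableOn (F a b p) (Ioo 0 t) := by
    rw [← intervalIntegrable_iff_integrableOn_Ioo_of_le ht.le]
    have hp : 0 < α * p.1 + β := by positivity
    have hq : 0 < α * p.2 + γ := by positivity
    simpa only [F, mul_mul_mul_comm (a ^ p.1)] using
      (intervalIntegrable_rlKernel_mul_rlKernel hp hq ht).const_mul (a ^ p.1 * b ^ p.2)
  have hF_norm (p : ℕ × ℕ) : ∫ x in Ioo 0 t, ‖F a b p x‖ = ∫ x in Ioo 0 t, F |a| |b| p x := by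
    refine setIntegral_congr_fun measurableSet_Ioo fun x hx ↦ ?_
    have hp : 0 < rlKernel (α * p.1 + β) x := rlKernel_pos (by positivity) hx.1
    have hq : 0 < rlKernel (α * p.2 + γ) (t - x) := rlKernel_pos (by positivity) (sub_pos.2 hx.2)
    simp only [F, Real.norm_eq_abs, abs_mul, abs_pow, abs_of_pos hp, abs_of_pos hq]
  have hF_summable : Summable fun p ↦ ∫ x in Ioo 0 t, ‖F a b p x‖ := by
    simp only [hF_norm, hF_integral]
    exact summable_pow_mul_pow_mul_add (h := fun n ↦ rlKernel (α * n + (β + γ)) t)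
      (abs_nonneg a) (abs_nonneg b) (fun n ↦ (rlKernel_pos (by positivity) ht).le)
      (hasSum_pow_mul_rlKernel hα ht (β + γ) (|a| + |b|)).summable
  convert! hasSum_integral_of_summable_integral_norm hF_integrable hF_summable using 1
  · simp only [hF_integral]
  · rw [intervalIntegral.integral_of_le ht.le, integral_Ioc_eq_integral_Ioo]
    refine setIntegral_congr_fun measurableSet_Ioo fun x hx ↦ ?_
    exact (hasSum_pow_mul_rlKernel_mul_pow_mul_rlKernel hα hx.1 (sub_pos.2 hx.2)
      β γ a b).tsum_eq.symm

theorem mittagLeffler_convolution_ne_general (hα : 0 < α) (hβ : 0 < β) (hγ : 0 < γ) (ht : 0 < t)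
    {a b : ℝ} (hab : a ≠ b) :
    ∫ x in (0 : ℝ)..t, x ^ (β - 1) * ml α β (a * x ^ α) *
        ((t - x) ^ (γ - 1) * ml α γ (b * (t - x) ^ α))
      = (a * ml α (β + γ) (a * t ^ α) - b * ml α (β + γ) (b * t ^ α)) / (a - b)
        * t ^ (β + γ - 1) := by
  have hconv := hasSum_sum_antidiagonal_pow_mul_pow_mul
    (h := fun n ↦ rlKernel (α * n + (β + γ)) t) (hasSum_integral_mul_ml hα hβ hγ ht a b)
  have hseries (c : ℝ) := (hasSum_pow_mul_rlKernel hα ht (β + γ) c).mul_left c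
  have hdiff := ((hseries a).sub (hseries b)).div_const (a - b)
  have hcoeff (n : ℕ) :
      (∑ p ∈ Finset.HasAntidiagonal.antidiagonal n, a ^ p.1 * b ^ p.2)
          * rlKernel (α * n + (β + γ)) t
        = (a * (a ^ n * rlKernel (α * n + (β + γ)) t)
            - b * (b ^ n * rlKernel (α * n + (β + γ)) t)) / (a - b) := by
    rw [sum_antidiagonal_pow_mul_pow hab]
    ring
  rw [hconv.unique (hdiff.congr_fun hcoeff)]
  ring

end Convolution

/-- for `0<α<1`, `β>0`, `λ,μ>0`, `λ ≠ μ` and `t > 0`,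
`∫₀ᵗ τ^{α−1} E_{α,α}(−μτ^α) (t−τ)^{β−1} E_{α,β}(−λ(t−τ)^α) dτ
  = ((λ E_{α,α+β}(−λt^α) − μ E_{α,α+β}(−μt^α))/(λ−μ)) t^{α+β−1}`. -/
theorem mittagLeffler_convolution_ne (α β lam mu : ℝ)
    (hα : 0 < α) (hα1 : α < 1) (hβ : 0 < β) (hlam : 0 < lam) (hmu : 0 < mu)
    (hne : lam ≠ mu) :
    ∀ t : ℝ, 0 < t →
      (∫ τ in (0:ℝ)..t, τ ^ (α - 1) * ml α α (-mu * τ ^ α) *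
          ((t - τ) ^ (β - 1) * ml α β (-lam * (t - τ) ^ α)))
        = ((lam * ml α (α + β) (-lam * t ^ α) - mu * ml α (α + β) (-mu * t ^ α))
            / (lam - mu)) * t ^ (α + β - 1) := by
  intro t ht
  rw [mittagLeffler_convolution_ne_general hα hα hβ ht (neg_injective.ne hne.symm)]
  ring
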